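/- Let (X,d,μ) be a metric measure space and B_0 a ball of radius r_0 such that μ(B(x,r)) ≥ b r^Q for all B(x,r) ⊆ 2B_0, with 0 < sp < Q. Let u ∈ L^0(2B_0) have a fractional s-gradient (g_j) with ‖(g_j)‖_{L^p(2B_0, ℓ^q)} < ∞, 0 < q < ∞. Then u ∈ L^{p*}(B_0) with p* = Qp/(Q − sp), and inf_{c∈ℝ} (⨍_{B_0} |u − c|^{p*} dμ)^{1/p*} ≤ C (μ(2B_0)/(b r_0^Q))^{1/p} r_0^s (⨍_{2B_0} (∑_{j∈ℤ} g_j^q)^{p/q} dμ)^{1/p}, where C depends only on s, p, q, Q. -/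

import Mathlib

open Metric MeasureTheory
open scoped ENNReal

/-- `(g k)` is a fractional `s`-gradient of `u` on `S`. -/
def IsFractionalSGradient {X : Type*} [MetricSpace X] [MeasurableSpace X]
    (μ : Measure X) (S : Set X) (s : ℝ) (u : X → ℝ) (g : ℤ → X → ℝ) : Prop :=
  (∀ k x, 0 ≤ g k x) ∧
  ∃ E : Set X, E ⊆ S ∧ μ E = 0 ∧
    ∀ (k : ℤ), ∀ x ∈ S \ E, ∀ y ∈ S \ E,
      2 ^ ((k : ℝ) - 1) ≤ dist x y → dist x y < 2 ^ (k : ℝ) →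
      |u x - u y| ≤ dist x y ^ s * (g k x + g k y)

lemma core_bound (s p Q P : ℝ) (hs : 0 < s) (hp : 0 < p) (hQ : 0 < Q)
    (hspQ : s * p < Q) (hP : P = Q * p / (Q - s * p))
    (ρ θ β C₁ : ℝ) (hρ : ρ = 2 ^ (-(p / Q))) (hθ : θ = 1 - ρ) (hβ : β = 2 * ρ ^ s)
    (hC₁ : C₁ = 2 * 4 ^ s + 3 / (β - 1))
    (X : Type) [MetricSpace X] [MeasurableSpace X] [BorelSpace X] (μ : Measure X)
    (x₀ : X) (r₀ b : ℝ) (u : X → ℝ) (hr₀ : 0 < r₀) (hb : 0 < b)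
    (hμ : ∀ (x : X) (r : ℝ), 0 < r → ball x r ⊆ ball x₀ (2 * r₀) →
          ENNReal.ofReal (b * r ^ Q) ≤ μ (ball x r))
    (hu : Measurable u) (K : X → ℝ≥0∞) (hK : Measurable K) (D : Set X)
    (hDS : D ⊆ ball x₀ (2 * r₀))
    (hD : ∀ M, MeasurableSet M → M ⊆ ball x₀ (2 * r₀) → μ M ≠ 0 → (M ∩ D).Nonempty)
    (l : ℝ) (hl : 0 < l)
    (hlip : ∀ t t' : ℝ, 0 < t → 0 < t' → ∀ x ∈ D, ∀ y ∈ D, K x ≤ ENNReal.ofReal (t ^ p) →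
      K y ≤ ENNReal.ofReal (t' ^ p) → |u x - u y| ≤ dist x y ^ s * (t + t'))
    (hint : ∫⁻ x in ball x₀ (2 * r₀), K x ∂μ ≤ ENNReal.ofReal (θ ^ Q / 2 * (b * r₀ ^ Q) * l ^ p)) :
    ∃ c : ℝ, ∫⁻ x in ball x₀ r₀, ENNReal.ofReal (|u x - c|) ^ P ∂μ ≤
      ENNReal.ofReal ((C₁ * l * r₀ ^ s) ^ P * (1 + 2 ^ p)) * μ (ball x₀ r₀) := by
  have hQsp : 0 < Q - s * p := by linarith
  have hP0 : 0 < P := by rw [hP]; positivity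
  have hρ0 : 0 < ρ := by rw [hρ]; positivity
  have hρ1 : ρ < 1 := by
    rw [hρ]; exact Real.rpow_lt_one_of_one_lt_of_neg (by norm_num) (by
      have : 0 < p / Q := by positivity
      linarith)
  have hθ0 : 0 < θ := by linarith
  have hθ1 : θ < 1 := by linarith
  have hρQ : ρ ^ Q = 2 ^ (-p) := by
    rw [hρ, ← Real.rpow_mul (by norm_num)]; congr 1; field_simp
  have hβα : β = 2 ^ (1 - s * p / Q) := by
    rw [hβ, hρ, ← Real.rpow_mul (by norm_num), sub_eq_add_neg, Real.rpow_add (by norm_num),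
      Real.rpow_one]
    congr 2; field_simp
  have hβ1 : 1 < β := by
    rw [hβα]; apply Real.one_lt_rpow (by norm_num)
    have : s * p / Q < 1 := by rw [div_lt_one hQ]; exact hspQ
    linarith
  have hβ0 : 0 < β := by linarith
  have hβP : β ^ P = 2 ^ p := by
    rw [hβα, ← Real.rpow_mul (by norm_num), hP]; congr 1; field_simp
  have hC₁0 : 0 < C₁ := by
    rw [hC₁]
    have : 0 < β - 1 := by linarith
    positivity
  have h2n : ∀ n : ℕ, ((2:ℝ) ^ n) ^ p = (2 ^ p) ^ n := by
    intro n; rw [← Real.rpow_natCast, ← Real.rpow_natCast, ← Real.rpow_mul (by norm_num),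
      ← Real.rpow_mul (by norm_num), mul_comm]
  -- picking points
  have pick : ∀ (n : ℕ) (x : X), ball x (r₀ * θ * ρ ^ n) ⊆ ball x₀ (2 * r₀) →
      ∃ y ∈ D, dist x y < r₀ * θ * ρ ^ n ∧ K y ≤ ENNReal.ofReal ((l * 2 ^ n) ^ p) := by
    intro n x hx
    set S := ball x₀ (2 * r₀)
    set A := {y | ENNReal.ofReal ((l * 2 ^ n) ^ p) ≤ K y} with hA
    have hAm : MeasurableSet A := measurableSet_le measurable_const hK
    have hmk := mul_meas_ge_le_lintegral (μ := μ.restrict S) hK (ENNReal.ofReal ((l * 2 ^ n) ^ p))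
    rw [Measure.restrict_apply hAm] at hmk
    have hpos : 0 < (l * 2 ^ n) ^ p := by positivity
    have hexp : b * (r₀ * θ * ρ ^ n) ^ Q * (l * 2 ^ n) ^ p = θ ^ Q * (b * r₀ ^ Q) * l ^ p := by
      rw [Real.mul_rpow (by positivity) (by positivity), Real.mul_rpow (by positivity) (by positivity),
        Real.mul_rpow (by positivity) (by positivity), h2n]
      have : (ρ ^ n) ^ Q = (2 ^ (-p)) ^ n := by
        rw [← hρQ, ← Real.rpow_natCast, ← Real.rpow_natCast, ← Real.rpow_mul hρ0.le,
          ← Real.rpow_mul hρ0.le, mul_comm]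
      rw [this]
      have h1 : ((2:ℝ) ^ (-p)) ^ n * (2 ^ p) ^ n = 1 := by
        rw [← mul_pow, ← Real.rpow_add (by norm_num)]; simp
      linear_combination (b * r₀ ^ Q * θ ^ Q * l ^ p) * h1
    have hbig := hμ x (r₀ * θ * ρ ^ n) (by positivity) hx
    have hlt : μ (A ∩ S) < μ (ball x (r₀ * θ * ρ ^ n)) := by
      refine lt_of_lt_of_le ?_ hbig
      by_contra hcon
      push Not at hcon
      have h3 : ENNReal.ofReal (θ ^ Q * (b * r₀ ^ Q) * l ^ p) ≤
          ENNReal.ofReal (θ ^ Q / 2 * (b * r₀ ^ Q) * l ^ p) := by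
        rw [← hexp, ENNReal.ofReal_mul (by positivity), mul_comm]
        exact (mul_le_mul_right hcon _).trans (hmk.trans hint)
      rw [ENNReal.ofReal_le_ofReal_iff (by positivity)] at h3
      have : 0 < θ ^ Q * (b * r₀ ^ Q) * l ^ p := by positivity
      linarith
    have hne : μ (ball x (r₀ * θ * ρ ^ n) \ A) ≠ 0 := by
      intro h0
      have : μ (ball x (r₀ * θ * ρ ^ n)) ≤ μ (A ∩ S) := by
        calc μ (ball x (r₀ * θ * ρ ^ n)) ≤ μ ((ball x (r₀ * θ * ρ ^ n) \ A) ∪ (A ∩ S)) := by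
              apply measure_mono
              intro y hy
              by_cases hyA : y ∈ A
              · exact Or.inr ⟨hyA, hx hy⟩
              · exact Or.inl ⟨hy, hyA⟩
          _ ≤ _ := measure_union_le _ _
          _ = _ := by rw [h0, zero_add]
      exact absurd this (not_le.mpr hlt)
    obtain ⟨y, hy, hyD⟩ := hD _ (measurableSet_ball.diff hAm) (Set.sdiff_subset.trans hx) hne
    refine ⟨y, hyD, ?_, ?_⟩
    · rw [dist_comm]; exact hy.1
    · exact (not_le.mp hy.2).le
  -- chain
  have chain : ∀ (n : ℕ) (x : X), x ∈ D → K x ≤ ENNReal.ofReal ((l * 2 ^ n) ^ p) →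
      dist x x₀ + ∑ k ∈ Finset.range n, r₀ * θ * ρ ^ k ≤ 2 * r₀ →
      ∃ y ∈ D, K y ≤ ENNReal.ofReal ((l * 2 ^ 0) ^ p) ∧
        |u x - u y| ≤ ∑ k ∈ Finset.range n, 3 * l * r₀ ^ s * β ^ k := by
    intro n
    induction n with
    | zero => intro x hx hKx _; exact ⟨x, hx, hKx, by simp⟩
    | succ n ih =>
      intro x hx hKx hd
      rw [Finset.sum_range_succ] at hd
      have hsum0 : 0 ≤ ∑ k ∈ Finset.range n, r₀ * θ * ρ ^ k :=
        Finset.sum_nonneg fun _ _ => by positivity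
      obtain ⟨z, hzD, hxz, hKz⟩ := pick n x (by
        apply ball_subset_ball'; linarith)
      obtain ⟨y, hyD, hKy, hy⟩ := ih z hzD hKz (by
        have := dist_triangle z x x₀
        rw [dist_comm z x] at this
        linarith)
      refine ⟨y, hyD, hKy, ?_⟩
      rw [Finset.sum_range_succ]
      have h1 := hlip _ _ (by positivity) (by positivity) x hx z hzD hKx hKz
      have h2 : dist x z ^ s ≤ (r₀ * θ * ρ ^ n) ^ s :=
        Real.rpow_le_rpow dist_nonneg hxz.le hs.le
      have h3 : (r₀ * θ * ρ ^ n) ^ s ≤ r₀ ^ s * (ρ ^ s) ^ n := by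
        rw [Real.mul_rpow (by positivity) (by positivity), Real.mul_rpow (by positivity) (by positivity)]
        have e : (ρ ^ n) ^ s = (ρ ^ s) ^ n := by
          rw [← Real.rpow_natCast, ← Real.rpow_natCast, ← Real.rpow_mul hρ0.le,
          ← Real.rpow_mul hρ0.le, mul_comm]
        rw [e]
        have : θ ^ s ≤ 1 := Real.rpow_le_one hθ0.le hθ1.le hs.le
        have hh : 0 < r₀ ^ s * (ρ ^ s) ^ n := by positivity
        nlinarith
      have h4 : dist x z ^ s * (l * 2 ^ (n+1) + l * 2 ^ n) ≤ 3 * l * r₀ ^ s * β ^ n := by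
        calc _ ≤ (r₀ ^ s * (ρ ^ s) ^ n) * (l * 2 ^ (n+1) + l * 2 ^ n) := by
              gcongr; exact h2.trans h3
          _ = _ := by rw [hβ, mul_pow]; ring
      have h5 := abs_sub_le (u x) (u z) (u y)
      linarith
  have hgeo : ∀ n : ℕ, ∑ k ∈ Finset.range n, r₀ * θ * ρ ^ k ≤ r₀ := by
    intro n
    rw [← Finset.mul_sum]
    have := mul_neg_geom_sum ρ n
    rw [mul_assoc, hθ, this]
    have : 0 < ρ ^ n := by positivity
    nlinarith
  -- centre
  obtain ⟨y₀, hy₀D, -, hKy₀⟩ := pick 0 x₀ (by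
    apply ball_subset_ball; simp; nlinarith)
  have ptw : ∀ (n : ℕ) (x : X), x ∈ D → dist x x₀ < r₀ → K x ≤ ENNReal.ofReal ((l * 2 ^ n) ^ p) →
      |u x - u y₀| ≤ C₁ * l * r₀ ^ s * β ^ n := by
    intro n x hx hxd hKx
    obtain ⟨y, hyD, hKy, hy⟩ := chain n x hx hKx (by have := hgeo n; linarith)
    have h1 := hlip _ _ (by positivity) (by positivity) y hyD y₀ hy₀D hKy hKy₀
    have h2 : dist y y₀ ^ s ≤ 4 ^ s * r₀ ^ s := by
      rw [← Real.mul_rpow (by norm_num) hr₀.le]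
      apply Real.rpow_le_rpow dist_nonneg _ hs.le
      have := dist_triangle_right y y₀ x₀
      have a1 := mem_ball.mp (hDS hyD)
      have a2 := mem_ball.mp (hDS hy₀D)
      linarith
    have h3 : ∑ k ∈ Finset.range n, 3 * l * r₀ ^ s * β ^ k ≤ 3 * l * r₀ ^ s * (β ^ n / (β - 1)) := by
      rw [← Finset.mul_sum, geom_sum_eq hβ1.ne']
      have : 0 < β - 1 := by linarith
      gcongr
      linarith
    have h4 : dist y y₀ ^ s * (l * 2 ^ 0 + l * 2 ^ 0) ≤ 4 ^ s * r₀ ^ s * (2 * l) * β ^ n := by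
      have hb1 : 1 ≤ β ^ n := one_le_pow₀ hβ1.le
      calc _ ≤ 4 ^ s * r₀ ^ s * (l * 2 ^ 0 + l * 2 ^ 0) := by gcongr
        _ = 4 ^ s * r₀ ^ s * (2 * l) * 1 := by ring
        _ ≤ _ := by gcongr
    have h5 := abs_sub_le (u x) (u y) (u y₀)
    have h6 : C₁ * l * r₀ ^ s * β ^ n = 3 * l * r₀ ^ s * (β ^ n / (β - 1)) +
        4 ^ s * r₀ ^ s * (2 * l) * β ^ n := by rw [hC₁]; ring
    linarith
  set A := C₁ * l * r₀ ^ s with hAdef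
  have hA0 : 0 < A := by positivity
  refine ⟨u y₀, ?_⟩
  have ptw2 : ∀ x ∈ D, dist x x₀ < r₀ → K x ≠ ⊤ →
      ENNReal.ofReal (|u x - u y₀|) ^ P ≤
        ENNReal.ofReal (A ^ P) * (1 + ENNReal.ofReal (2 ^ p / l ^ p) * K x) := by
    intro x hx hxd hKx
    have hex : ∃ n : ℕ, K x ≤ ENNReal.ofReal ((l * 2 ^ n) ^ p) := by
      have h2p : (1:ℝ) < 2 ^ p := Real.one_lt_rpow (by norm_num) hp
      obtain ⟨n, hn⟩ := pow_unbounded_of_one_lt ((K x).toReal / l ^ p) h2p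
      refine ⟨n, ?_⟩
      rw [ENNReal.le_ofReal_iff_toReal_le hKx (by positivity), Real.mul_rpow hl.le (by positivity), h2n]
      rw [div_lt_iff₀ (by positivity)] at hn
      linarith
    classical
    have hfind := Nat.find_spec hex
    set n := Nat.find hex with hn
    have h1 := ptw n x hx hxd hfind
    have h2 : ENNReal.ofReal (|u x - u y₀|) ^ P ≤ ENNReal.ofReal (A ^ P) * ENNReal.ofReal ((2 ^ p) ^ n) := by
      rw [ENNReal.ofReal_rpow_of_nonneg (abs_nonneg _) hP0.le, ← ENNReal.ofReal_mul (by positivity)]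
      apply ENNReal.ofReal_le_ofReal
      calc _ ≤ (A * β ^ n) ^ P := Real.rpow_le_rpow (abs_nonneg _) h1 hP0.le
        _ = _ := by
          rw [Real.mul_rpow hA0.le (by positivity), ← hβP, ← Real.rpow_natCast, ← Real.rpow_natCast,
            ← Real.rpow_mul hβ0.le, ← Real.rpow_mul hβ0.le, mul_comm P]
    refine h2.trans ?_
    gcongr
    rcases Nat.eq_zero_or_pos n with h0 | h0
    · rw [h0]; simp
    · have hm := Nat.find_min hex (m := n - 1) (by omega)
      push Not at hm
      refine le_trans ?_ le_add_self
      calc ENNReal.ofReal ((2 ^ p) ^ n)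
          = ENNReal.ofReal (2 ^ p / l ^ p) * ENNReal.ofReal ((l * 2 ^ (n-1)) ^ p) := by
            rw [← ENNReal.ofReal_mul (by positivity), Real.mul_rpow hl.le (by positivity), h2n]
            congr 1
            obtain ⟨m, hm⟩ : ∃ m, n = m + 1 := ⟨n - 1, by omega⟩
            rw [hm, Nat.add_sub_cancel, pow_succ]
            have : l ^ p ≠ 0 := by positivity
            field_simp
        _ ≤ _ := by gcongr
  -- a.e. bound
  have hKfin : μ (ball x₀ (2 * r₀) ∩ {x | K x = ⊤}) = 0 := by
    have h := ae_lt_top hK (ne_top_of_le_ne_top ENNReal.ofReal_ne_top hint)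
    rw [ae_iff, Measure.restrict_apply₀' measurableSet_ball.nullMeasurableSet] at h
    rw [Set.inter_comm]
    simpa using h
  have hsub : ball x₀ r₀ ⊆ ball x₀ (2 * r₀) := ball_subset_ball (by linarith)
  have hlm : Measurable fun x => ENNReal.ofReal (|u x - u y₀|) ^ P := by fun_prop
  have hrm : Measurable fun x => ENNReal.ofReal (A ^ P) * (1 + ENNReal.ofReal (2 ^ p / l ^ p) * K x) := by
    fun_prop
  have hae : ∀ᵐ x ∂(μ.restrict (ball x₀ r₀)), ENNReal.ofReal (|u x - u y₀|) ^ P ≤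
        ENNReal.ofReal (A ^ P) * (1 + ENNReal.ofReal (2 ^ p / l ^ p) * K x) := by
    have hBm : MeasurableSet {x | ENNReal.ofReal (|u x - u y₀|) ^ P ≤
        ENNReal.ofReal (A ^ P) * (1 + ENNReal.ofReal (2 ^ p / l ^ p) * K x)} := measurableSet_le hlm hrm
    set B := {x | ENNReal.ofReal (|u x - u y₀|) ^ P ≤
        ENNReal.ofReal (A ^ P) * (1 + ENNReal.ofReal (2 ^ p / l ^ p) * K x)} with hB
    have hT : MeasurableSet {x | K x = ⊤} := hK (measurableSet_singleton ⊤)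
    have h0 : μ ((ball x₀ r₀ \ B) \ {x | K x = ⊤}) = 0 := by
      by_contra hne
      obtain ⟨x, ⟨⟨hx1, hx2⟩, hx3⟩, hx4⟩ := hD _ ((measurableSet_ball.diff hBm).diff hT)
        ((Set.sdiff_subset.trans Set.sdiff_subset).trans hsub) hne
      exact hx2 (ptw2 x hx4 hx1 hx3)
    rw [ae_iff, Measure.restrict_apply₀' measurableSet_ball.nullMeasurableSet]
    refine measure_mono_null ?_ (measure_union_null h0 hKfin)
    rintro x ⟨hx1, hx2⟩
    by_cases hx : K x = ⊤
    · exact Or.inr ⟨hsub hx2, hx⟩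
    · exact Or.inl ⟨⟨hx2, hx1⟩, hx⟩
  refine (lintegral_mono_ae hae).trans ?_
  have hmeas : ENNReal.ofReal (b * r₀ ^ Q) ≤ μ (ball x₀ r₀) := hμ x₀ r₀ hr₀ hsub
  rw [lintegral_const_mul _ (by fun_prop), lintegral_add_left measurable_const,
    lintegral_const_mul _ hK, ENNReal.ofReal_mul (by positivity), mul_assoc]
  gcongr
  have hI : ∫⁻ x in ball x₀ r₀, K x ∂μ ≤ ENNReal.ofReal (θ ^ Q / 2 * (b * r₀ ^ Q) * l ^ p) :=
    (lintegral_mono_set hsub).trans hint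
  have hfin : ENNReal.ofReal (2 ^ p / l ^ p) * ∫⁻ x in ball x₀ r₀, K x ∂μ ≤
      ENNReal.ofReal (2 ^ p) * μ (ball x₀ r₀) := by
    calc _ ≤ ENNReal.ofReal (2 ^ p / l ^ p) * ENNReal.ofReal (θ ^ Q / 2 * (b * r₀ ^ Q) * l ^ p) := by gcongr
      _ = ENNReal.ofReal (2 ^ p * (θ ^ Q / 2)) * ENNReal.ofReal (b * r₀ ^ Q) := by
        rw [← ENNReal.ofReal_mul (by positivity), ← ENNReal.ofReal_mul (by positivity)]
        congr 1
        have : l ^ p ≠ 0 := by positivity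
        field_simp
      _ ≤ _ := by
        gcongr
        have : θ ^ Q ≤ 1 := Real.rpow_le_one hθ0.le hθ1.le hQ.le
        have h2 : (0:ℝ) < 2 ^ p := by positivity
        nlinarith
  rw [ENNReal.ofReal_add (by norm_num) (by positivity), add_mul]
  simp only [lintegral_const, Measure.restrict_apply_univ, ENNReal.ofReal_one]
  gcongr

/-- Sobolev–Poincaré embedding on balls (part 1 of Theorem 3.1): under the measure
lower bound `μ(B(x,r)) ≥ b r^Q` on sub-balls of `2B₀` and `0 < sp < Q`, a function
with fractional `s`-gradient `(g_j)` of finite `L^p(ℓ^q)`-norm belongs to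
`L^{p*}(B₀)`, `p* = Qp/(Q−sp)`, with
`inf_c (⨍_{B₀}|u−c|^{p*})^{1/p*} ≤ C (μ(2B₀)/(b r₀^Q))^{1/p} r₀^s
(⨍_{2B₀}(∑_j g_j^q)^{p/q})^{1/p}`. -/
theorem sobolev_poincare_embedding_TL
    (s p q Q : ℝ) (hs : 0 < s) (hp : 0 < p) (hq : 0 < q) (hQ : 0 < Q)
    (hspQ : s * p < Q) :
    ∃ C : ℝ, 0 < C ∧
      ∀ (X : Type) [inst : MetricSpace X] [instm : MeasurableSpace X]
        [instb : BorelSpace X] (μ : Measure X)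
        (x₀ : X) (r₀ b : ℝ) (u : X → ℝ) (g : ℤ → X → ℝ),
        0 < r₀ → 0 < b →
        (∀ (x : X) (r : ℝ), 0 < r → ball x r ⊆ ball x₀ (2 * r₀) →
          ENNReal.ofReal (b * r ^ Q) ≤ μ (ball x r)) →
        Measurable u →
        IsFractionalSGradient μ (ball x₀ (2 * r₀)) s u g →
        (∫⁻ x in ball x₀ (2 * r₀),
            (∑' j : ℤ, ENNReal.ofReal (g j x) ^ q) ^ (p / q) ∂μ) < ⊤ →
        0 < μ (ball x₀ (2 * r₀)) → μ (ball x₀ (2 * r₀)) < ⊤ →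
        ((∫⁻ x in ball x₀ r₀,
            ENNReal.ofReal (|u x|) ^ (Q * p / (Q - s * p)) ∂μ) < ⊤ ∧
         (⨅ cc : ℝ,
            (((μ (ball x₀ r₀)).toReal)⁻¹ *
              (∫⁻ x in ball x₀ r₀,
                ENNReal.ofReal (|u x - cc|) ^ (Q * p / (Q - s * p)) ∂μ).toReal) ^
              ((Q - s * p) / (Q * p))) ≤
            C * ((μ (ball x₀ (2 * r₀))).toReal / (b * r₀ ^ Q)) ^ (1 / p) * r₀ ^ s *
              (((μ (ball x₀ (2 * r₀))).toReal)⁻¹ *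
                (∫⁻ x in ball x₀ (2 * r₀),
                  (∑' j : ℤ, ENNReal.ofReal (g j x) ^ q) ^ (p / q) ∂μ).toReal) ^ (1 / p)) := by
  
  obtain ⟨P, hP⟩ : ∃ P, P = Q * p / (Q - s * p) := ⟨_, rfl⟩
  obtain ⟨ρ, hρ⟩ : ∃ ρ : ℝ, ρ = 2 ^ (-(p / Q)) := ⟨_, rfl⟩
  obtain ⟨θ, hθ⟩ : ∃ θ : ℝ, θ = 1 - ρ := ⟨_, rfl⟩
  obtain ⟨β, hβ⟩ : ∃ β : ℝ, β = 2 * ρ ^ s := ⟨_, rfl⟩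
  obtain ⟨C₁, hC₁⟩ : ∃ C₁ : ℝ, C₁ = 2 * 4 ^ s + 3 / (β - 1) := ⟨_, rfl⟩
  have hQsp : 0 < Q - s * p := by linarith
  have hP0 : 0 < P := by rw [hP]; positivity
  have hρ0 : 0 < ρ := by rw [hρ]; positivity
  have hρ1 : ρ < 1 := by
    rw [hρ]; exact Real.rpow_lt_one_of_one_lt_of_neg (by norm_num) (by
      have : 0 < p / Q := by positivity
      linarith)
  have hθ0 : 0 < θ := by linarith
  have hβα : β = 2 ^ (1 - s * p / Q) := by
    rw [hβ, hρ, ← Real.rpow_mul (by norm_num), sub_eq_add_neg, Real.rpow_add (by norm_num),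
      Real.rpow_one]
    congr 2; field_simp
  have hβ1 : 1 < β := by
    rw [hβα]; apply Real.one_lt_rpow (by norm_num)
    have : s * p / Q < 1 := by rw [div_lt_one hQ]; exact hspQ
    linarith
  have hC₁0 : 0 < C₁ := by
    rw [hC₁]
    have : 0 < β - 1 := by linarith
    positivity
  have hPinv : (Q - s * p) / (Q * p) = 1 / P := by rw [hP]; field_simp
  refine ⟨C₁ * (1 + 2 ^ p) ^ (1 / P) * (2 / θ ^ Q) ^ (1 / p), by positivity, ?_⟩
  intro X _ _ _ μ x₀ r₀ b u g hr₀ hb hμ hu hg hN hm0 hmt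
  rw [← hP, hPinv]
  obtain ⟨hg0, E, hES, hE0, hgE⟩ := hg
  set S := ball x₀ (2 * r₀) with hS
  set F : X → ℝ≥0∞ := fun x => (∑' j : ℤ, ENNReal.ofReal (g j x) ^ q) ^ (p / q) with hF
  set N := (∫⁻ x in S, F x ∂μ).toReal with hNdef
  set m := (μ S).toReal with hmdef
  have hmpos : 0 < m := ENNReal.toReal_pos hm0.ne' hmt.ne
  have hN0 : 0 ≤ N := ENNReal.toReal_nonneg
  set w := b * r₀ ^ Q with hw
  have hwpos : 0 < w := by positivity
  have hsub : ball x₀ r₀ ⊆ S := ball_subset_ball (by linarith)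
  have hB0t : μ (ball x₀ r₀) < ⊤ := (measure_mono hsub).trans_lt hmt
  have hB0 : 0 < (μ (ball x₀ r₀)).toReal := by
    apply ENNReal.toReal_pos _ hB0t.ne
    have := hμ x₀ r₀ hr₀ hsub
    exact (lt_of_lt_of_le (by simpa using hwpos) this).ne'
  obtain ⟨H, hHm, hHF, hHint⟩ := exists_measurable_le_lintegral_eq (μ.restrict S) F
  have key : ∀ ε : ℝ, 0 < ε → ∃ c : ℝ, ∫⁻ x in ball x₀ r₀, ENNReal.ofReal (|u x - c|) ^ P ∂μ ≤
      ENNReal.ofReal ((C₁ * ((2 / θ ^ Q) ^ (1 / p) * ((N + ε * m) / w) ^ (1 / p)) * r₀ ^ s) ^ P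
        * (1 + 2 ^ p)) * μ (ball x₀ r₀) := by
    intro ε hε
    have hNe : 0 < N + ε * m := by positivity
    refine core_bound s p Q P hs hp hQ hspQ hP ρ θ β C₁ hρ hθ hβ hC₁ X μ x₀ r₀ b u hr₀ hb hμ hu
      (fun x => H x + ENNReal.ofReal ε) (by fun_prop)
      {x | x ∈ S \ E ∧ F x ≤ H x + ENNReal.ofReal ε} (fun x hx => hx.1.1) ?_ _ (by positivity) ?_ ?_
    · intro M hM hMS hM0
      by_contra hcon
      rw [Set.not_nonempty_iff_eq_empty] at hcon
      set M' := M \ toMeasurable μ E with hM'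
      have hM'm : MeasurableSet M' := hM.diff (measurableSet_toMeasurable _ _)
      have hM'0 : μ M' ≠ 0 := by
        rw [hM', measure_sdiff_null (by rw [measure_toMeasurable, hE0])]; exact hM0
      have hle : ∫⁻ x in S, (H x + M'.indicator (fun _ => ENNReal.ofReal ε) x) ∂μ ≤
          ∫⁻ x in S, F x ∂μ := by
        apply lintegral_mono
        intro x
        by_cases hx : x ∈ M'
        · have hxD : ¬ (x ∈ S \ E ∧ F x ≤ H x + ENNReal.ofReal ε) := by
            intro h
            have : x ∈ M ∩ {x | x ∈ S \ E ∧ F x ≤ H x + ENNReal.ofReal ε} := ⟨hx.1, h⟩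
            rw [hcon] at this; exact this
          have hxE : x ∈ S \ E := ⟨hMS hx.1, fun h => hx.2 (subset_toMeasurable _ _ h)⟩
          simp only [Set.indicator_of_mem hx]
          by_contra h
          exact hxD ⟨hxE, (not_le.mp h).le⟩
        · simp only [Set.indicator_of_notMem hx, add_zero]; exact hHF x
      rw [lintegral_add_left hHm, ← hHint, lintegral_indicator hM'm,
        Measure.restrict_restrict hM'm, Set.inter_eq_left.mpr (Set.sdiff_subset.trans hMS)] at hle
      simp only [lintegral_const, Measure.restrict_apply_univ] at hle
      have h0 : ENNReal.ofReal ε * μ M' ≤ 0 := by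
        rw [← ENNReal.add_le_add_iff_left hN.ne, add_zero]
        exact hle
      simp only [nonpos_iff_eq_zero, mul_eq_zero, ENNReal.ofReal_eq_zero] at h0
      rcases h0 with h0 | h0
      · linarith
      · exact hM'0 h0
    · intro t t' ht ht' x hx y hy hKx hKy
      have hgle : ∀ (z : X) (τ : ℝ), 0 < τ → F z ≤ ENNReal.ofReal (τ ^ p) → ∀ k, g k z ≤ τ := by
        intro z τ hτ hz k
        have h1 : ENNReal.ofReal (g k z) ^ p ≤ ENNReal.ofReal τ ^ p := by
          rw [ENNReal.ofReal_rpow_of_nonneg hτ.le hp.le]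
          refine le_trans ?_ hz
          calc ENNReal.ofReal (g k z) ^ p = (ENNReal.ofReal (g k z) ^ q) ^ (p / q) := by
                rw [← ENNReal.rpow_mul]; congr 1; field_simp
            _ ≤ _ := by
              apply ENNReal.rpow_le_rpow _ (by positivity)
              exact ENNReal.le_tsum k
        rw [ENNReal.rpow_le_rpow_iff hp, ENNReal.ofReal_le_ofReal_iff hτ.le] at h1
        exact h1
      have hgx := hgle x t ht (hx.2.trans hKx)
      have hgy := hgle y t' ht' (hy.2.trans hKy)
      rcases eq_or_ne x y with rfl | hxy
      · simp; positivity
      · have hd : 0 < dist x y := dist_pos.mpr hxy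
        obtain ⟨k, hk1, hk2⟩ := exists_mem_Ico_zpow hd (one_lt_two)
        have h := hgE (k + 1) x hx.1 y hy.1 (by
          push_cast; rw [add_sub_cancel_right, Real.rpow_intCast]; exact hk1) (by
          rw [Real.rpow_intCast]; exact hk2)
        refine h.trans ?_
        gcongr
        · exact hgx _
        · exact hgy _
    · rw [lintegral_add_left hHm, ← hHint]
      simp only [lintegral_const, Measure.restrict_apply_univ]
      apply le_of_eq
      rw [← ENNReal.ofReal_toReal hN.ne, ← ENNReal.ofReal_toReal hmt.ne,
        ← ENNReal.ofReal_mul hε.le, ← ENNReal.ofReal_add hN0 (by positivity)]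
      congr 1
      rw [Real.mul_rpow (by positivity) (by positivity), ← Real.rpow_mul (by positivity),
        ← Real.rpow_mul (by positivity), one_div, inv_mul_cancel₀ hp.ne', Real.rpow_one, Real.rpow_one]
      have : θ ^ Q ≠ 0 := by positivity
      field_simp
      rw [← hmdef, ← hw, mul_comm]
  have hcfin : ∀ ε : ℝ, ENNReal.ofReal ((C₁ * ((2 / θ ^ Q) ^ (1 / p) * ((N + ε * m) / w) ^ (1 / p)) * r₀ ^ s) ^ P
        * (1 + 2 ^ p)) * μ (ball x₀ r₀) < ⊤ := fun ε =>
    ENNReal.mul_lt_top ENNReal.ofReal_lt_top hB0t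
  constructor
  · obtain ⟨c, hc⟩ := key 1 one_pos
    have hc' := hc.trans_lt (hcfin 1)
    have hmono : ∀ x, ENNReal.ofReal (|u x|) ^ P ≤
        2 ^ P * ENNReal.ofReal (|u x - c|) ^ P + 2 ^ P * ENNReal.ofReal |c| ^ P := by
      intro x
      have h1 : ENNReal.ofReal |u x| ≤ 2 * max (ENNReal.ofReal |u x - c|) (ENNReal.ofReal |c|) := by
        calc ENNReal.ofReal |u x| ≤ ENNReal.ofReal (|u x - c| + |c|) := by
              apply ENNReal.ofReal_le_ofReal
              have := abs_add_le (u x - c) c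
              simpa using this
          _ = ENNReal.ofReal |u x - c| + ENNReal.ofReal |c| :=
              ENNReal.ofReal_add (abs_nonneg _) (abs_nonneg _)
          _ ≤ _ := by rw [two_mul]; exact add_le_add (le_max_left _ _) (le_max_right _ _)
      refine (ENNReal.rpow_le_rpow h1 hP0.le).trans ?_
      rw [ENNReal.mul_rpow_of_nonneg _ _ hP0.le, ← mul_add]
      gcongr
      rcases le_total (ENNReal.ofReal |u x - c|) (ENNReal.ofReal |c|) with h | h
      · rw [max_eq_right h]; exact le_add_self
      · rw [max_eq_left h]; exact le_self_add
    refine (lintegral_mono hmono).trans_lt ?_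
    rw [lintegral_add_right _ measurable_const, lintegral_const_mul _ (by fun_prop)]
    simp only [lintegral_const, Measure.restrict_apply_univ]
    have h2 : (2:ℝ≥0∞) ^ P < ⊤ := ENNReal.rpow_lt_top_of_nonneg hP0.le (by norm_num)
    have h3 : ENNReal.ofReal |c| ^ P < ⊤ := ENNReal.rpow_lt_top_of_nonneg hP0.le (by simp)
    exact ENNReal.add_lt_top.mpr ⟨ENNReal.mul_lt_top h2 hc',
      ENNReal.mul_lt_top (ENNReal.mul_lt_top h2 h3) hB0t⟩
  · have hbdd : BddBelow (Set.range fun cc : ℝ => (((μ (ball x₀ r₀)).toReal)⁻¹ *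
              (∫⁻ x in ball x₀ r₀, ENNReal.ofReal (|u x - cc|) ^ P ∂μ).toReal) ^ (1 / P)) := by
      refine ⟨0, ?_⟩
      rintro _ ⟨c, rfl⟩
      positivity
    have key2 : ∀ ε : ℝ, 0 < ε → (⨅ cc : ℝ, (((μ (ball x₀ r₀)).toReal)⁻¹ *
              (∫⁻ x in ball x₀ r₀, ENNReal.ofReal (|u x - cc|) ^ P ∂μ).toReal) ^ (1 / P)) ≤
        C₁ * (1 + 2 ^ p) ^ (1 / P) * (2 / θ ^ Q) ^ (1 / p) * r₀ ^ s * ((N + ε * m) / w) ^ (1 / p) := by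
      intro ε hε
      obtain ⟨c, hc⟩ := key ε hε
      refine (ciInf_le hbdd c).trans ?_
      have h1 := ENNReal.toReal_mono (hcfin ε).ne hc
      have hNe : 0 < N + ε * m := by positivity
      rw [ENNReal.toReal_mul, ENNReal.toReal_ofReal (by positivity)] at h1
      set Z := C₁ * ((2 / θ ^ Q) ^ (1 / p) * ((N + ε * m) / w) ^ (1 / p)) * r₀ ^ s with hZ
      have hZ0 : 0 < Z := by positivity
      calc _ ≤ (Z ^ P * (1 + 2 ^ p)) ^ (1 / P) := by
            apply Real.rpow_le_rpow (by positivity) _ (by positivity)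
            rw [inv_mul_le_iff₀ hB0]
            linarith
        _ = Z * (1 + 2 ^ p) ^ (1 / P) := by
            rw [Real.mul_rpow (by positivity) (by positivity), ← Real.rpow_mul hZ0.le,
              mul_one_div_cancel hP0.ne', Real.rpow_one]
        _ = _ := by rw [hZ]; ring
    have hrhs : C₁ * (1 + 2 ^ p) ^ (1 / P) * (2 / θ ^ Q) ^ (1 / p) * (m / w) ^ (1 / p) * r₀ ^ s *
        (m⁻¹ * N) ^ (1 / p) =
        C₁ * (1 + 2 ^ p) ^ (1 / P) * (2 / θ ^ Q) ^ (1 / p) * r₀ ^ s * ((N + 0 * m) / w) ^ (1 / p) := by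
      have : (m / w) ^ (1 / p) * (m⁻¹ * N) ^ (1 / p) = ((N + 0 * m) / w) ^ (1 / p) := by
        rw [← Real.mul_rpow (by positivity) (by positivity)]
        congr 1; field_simp; ring
      rw [← this]; ring
    rw [hrhs]
    have hcont : Continuous fun ε : ℝ =>
        C₁ * (1 + 2 ^ p) ^ (1 / P) * (2 / θ ^ Q) ^ (1 / p) * r₀ ^ s * ((N + ε * m) / w) ^ (1 / p) := by
      apply Continuous.mul continuous_const
      apply Continuous.rpow_const (by fun_prop)
      intro _; right; positivity
    have ht := (hcont.tendsto 0).mono_left (nhdsWithin_le_nhds (s := Set.Ioi 0))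
    exact ge_of_tendsto ht (Filter.eventually_of_mem self_mem_nhdsWithin key2)
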